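/- If p ∈ ℝ[x₁,…,xₙ] is SOS and v is a vertex of the Newton polytope New(p) (i.e., {v} is a face of New(p)), then all coordinates of v are even natural numbers and the coefficient of x^v in p is strictly positive. -/

import Mathlib

open MvPolynomial
open scoped Classical

noncomputable section

/-- Embed an exponent vector `a ∈ ℕⁿ` into `ℝⁿ`. -/
def toR {n : ℕ} (a : Fin n →₀ ℕ) : Fin n → ℝ := fun i => (a i : ℝ)

/-- `p` is a sum of squares of polynomials. -/
def IsSOS {n : ℕ} (p : MvPolynomial (Fin n) ℝ) : Prop :=
  ∃ (s : ℕ) (q : Fin s → MvPolynomial (Fin n) ℝ), p = ∑ i, (q i) ^ 2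

/-- `Proj(p,T)` for `T ⊆ ℝⁿ`: delete every term of `p` whose exponent vector is not in `T`. -/
def projR {n : ℕ} (p : MvPolynomial (Fin n) ℝ) (T : Set (Fin n → ℝ)) :
    MvPolynomial (Fin n) ℝ :=
  ∑ a ∈ p.support, if toR a ∈ T then monomial a (p.coeff a) else 0

/-- `Proj(p,T)` for `T ⊆ ℕⁿ`. -/
def projN {n : ℕ} (p : MvPolynomial (Fin n) ℝ) (T : Set (Fin n →₀ ℕ)) :
    MvPolynomial (Fin n) ℝ :=
  ∑ a ∈ p.support, if a ∈ T then monomial a (p.coeff a) else 0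

/-- The Newton polytope of `p`: convex hull of its support in `ℝⁿ`. -/
def newton {n : ℕ} (p : MvPolynomial (Fin n) ℝ) : Set (Fin n → ℝ) :=
  convexHull ℝ (toR '' ↑p.support)

/-- `F` is an (exposed) face of `N`: `F ⊆ N`, and either `F = N` or there is an
affine function vanishing on `F` and strictly positive on `N \ F`. -/
def IsFace {n : ℕ} (N F : Set (Fin n → ℝ)) : Prop :=
  F ⊆ N ∧ (F = N ∨ ∃ π : (Fin n → ℝ) →ᵃ[ℝ] ℝ,
    (∀ x ∈ F, π x = 0) ∧ ∀ x ∈ N \ F, 0 < π x)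

/-- `SOSS(p,G)`: whenever `p` is SOS, it has an SOS decomposition all of whose
summands have support contained in `G`. -/
def SOSS {n : ℕ} (p : MvPolynomial (Fin n) ℝ) (G : Finset (Fin n →₀ ℕ)) : Prop :=
  IsSOS p → ∃ (s : ℕ) (q : Fin s → MvPolynomial (Fin n) ℝ),
    p = ∑ i, (q i) ^ 2 ∧ ∀ i, (q i).support ⊆ G

/-- `V(p,G)`: elements `a ∈ G` whose double has the unique decomposition `a + a` in `G + G`. -/
def VSet {n : ℕ} (G : Finset (Fin n →₀ ℕ)) : Set (Fin n →₀ ℕ) :=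
  {a | a ∈ G ∧ ∀ b ∈ G, ∀ r ∈ G, b + r = a + a → b = a ∧ r = a}

/-- Membership in `Relat(a)` (least fixed point of the recursive definition):
`Relat(a) = {a/2}` if the unique decomposition of `a` in `G + G` is `a/2 + a/2`;
otherwise `Relat(a)` is the union of `Relat(2b) ∪ Relat(2r)` over decompositions
`a = b + r` with `b ≠ r`, `b, r ∈ G`; and `Relat(a) = ∅` if `a ∉ G + G`. -/
inductive RelatMem {n : ℕ} (G : Finset (Fin n →₀ ℕ)) :
    (Fin n →₀ ℕ) → (Fin n →₀ ℕ) → Prop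
  | base (a c : Fin n →₀ ℕ) (hc : c ∈ G) (hcc : c + c = a)
      (huniq : ∀ b ∈ G, ∀ r ∈ G, b + r = a → b = c) : RelatMem G a c
  | stepL (a b r v : Fin n →₀ ℕ) (hb : b ∈ G) (hr : r ∈ G) (hne : b ≠ r)
      (hbr : b + r = a) (hv : RelatMem G (b + b) v) : RelatMem G a v
  | stepR (a b r v : Fin n →₀ ℕ) (hb : b ∈ G) (hr : r ∈ G) (hne : b ≠ r)
      (hbr : b + r = a) (hv : RelatMem G (r + r) v) : RelatMem G a v

/-- `Relat(a)` as a set. -/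
def Relat {n : ℕ} (G : Finset (Fin n →₀ ℕ)) (a : Fin n →₀ ℕ) : Set (Fin n →₀ ℕ) :=
  {v | RelatMem G a v}

/-- `σ(T) = {r ∈ G : Relat(2r) ⊆ T}`. -/
def sigmaSet {n : ℕ} (G : Finset (Fin n →₀ ℕ)) (T : Set (Fin n →₀ ℕ)) :
    Set (Fin n →₀ ℕ) :=
  {r | r ∈ G ∧ Relat G (r + r) ⊆ T}

/-- `p` is a split polynomial with respect to `T₁, …, T_u ⊆ V(p,G)`. -/
def IsSplit {n : ℕ} (p : MvPolynomial (Fin n) ℝ) (G : Finset (Fin n →₀ ℕ))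
    (u : ℕ) (T : Fin u → Set (Fin n →₀ ℕ)) : Prop :=
  SOSS p G ∧ (∀ i, T i ⊆ VSet G) ∧ (∀ i, (T i).Nonempty) ∧
  (∀ i j, i ≠ j → Disjoint (T i) (T j)) ∧
  (∀ i, ∀ a ∈ sigmaSet G (T i), ∀ b ∈ sigmaSet G (T i), Relat G (a + b) ⊆ T i) ∧
  ∀ a ∈ p.support, ∃! i, Relat G a ⊆ T i

/-- The sub-polynomial `Σ_{a ∈ Support(p), Relat(a) ⊆ T} c_a x^a` of `p`. -/
def projRelat {n : ℕ} (p : MvPolynomial (Fin n) ℝ) (G : Finset (Fin n →₀ ℕ))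
    (T : Set (Fin n →₀ ℕ)) : MvPolynomial (Fin n) ℝ :=
  ∑ a ∈ p.support, if Relat G a ⊆ T then monomial a (p.coeff a) else 0

/-- `p` is a convex cover polynomial: some pairwise disjoint faces of `New(p)`
cover `Support(p)`. -/
def IsConvexCover {n : ℕ} (p : MvPolynomial (Fin n) ℝ) : Prop :=
  ∃ (u : ℕ) (F : Fin u → Set (Fin n → ℝ)),
    (∀ i, IsFace (newton p) (F i)) ∧
    (∀ i j, i ≠ j → Disjoint (F i) (F j)) ∧
    toR '' ↑p.support ⊆ ⋃ i, F i

end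

/-!
Let `C` be the convex hull of the supports of all the `qᵢ`. If `m` is an extreme point of `C`, then
`2m = b + r` with `b, r ∈ C` only for `b = r = m`, so nothing but squares contributes to the
coefficient of `∑ qᵢ²` at `2m`, which is therefore `∑ᵢ (coeff m qᵢ)² > 0`. Hence the Newton
polytope of `∑ qᵢ²` contains `2C`, as `C` is the convex hull of its extreme points; conversely,
every exponent of `∑ qᵢ²` is a sum of two exponents of some `qᵢ`. So the Newton polytope equals
`2C` (Reznick), and its vertices are the points `2m` above.
-/

section Convexity

variable {E : Type*} [AddCommGroup E] [Module ℝ E]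

theorem eq_of_add_eq_add_self_of_mem_extremePoints {A : Set E} {x y z : E}
    (hx : x ∈ A.extremePoints ℝ) (hy : y ∈ A) (hz : z ∈ A) (h : y + z = x + x) : y = x := by
  have hmid : midpoint ℝ y z = x := by
    rw [midpoint_eq_smul_add, h, ← midpoint_eq_smul_add, midpoint_self]
  exact hx.2 hy hz (hmid ▸ midpoint_mem_openSegment y z)

theorem convexHull_extremePoints_convexHull_of_finite [TopologicalSpace E] [T2Space E]
    [IsTopologicalAddGroup E] [ContinuousSMul ℝ E] [LocallyConvexSpace ℝ E] {s : Set E}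
    (hs : s.Finite) :
    convexHull ℝ ((convexHull ℝ s).extremePoints ℝ) = convexHull ℝ s := by
  have hext : ((convexHull ℝ s).extremePoints ℝ).Finite := hs.subset extremePoints_convexHull_subset
  rw [← (hext.isClosed_convexHull ℝ).closure_eq]
  exact closure_convexHull_extremePoints (hs.isCompact_convexHull ℝ) (convex_convexHull ℝ s)

theorem IsFace.isExtreme {n : ℕ} {N F : Set (Fin n → ℝ)} (hF : IsFace N F) : IsExtreme ℝ N F := by
  obtain ⟨hFN, rfl | ⟨π, hzero, hpos⟩⟩ := hF
  · exact IsExtreme.rfl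
  have hnonneg : ∀ y ∈ N, 0 ≤ π y := fun y hy ↦ by
    by_cases hyF : y ∈ F
    · exact (hzero y hyF).ge
    · exact (hpos y ⟨hy, hyF⟩).le
  refine ⟨hFN, fun x hx y hy z hz hzxy ↦ ?_⟩
  by_contra hxF
  obtain ⟨a, b, ha, hb, hab, rfl⟩ := hzxy
  have hcombo : π (a • x + b • y) = a * π x + b * π y := Convex.combo_affine_apply hab
  have hx_pos : 0 < a * π x := mul_pos ha (hpos x ⟨hx, hxF⟩)
  have hy_nonneg : 0 ≤ b * π y := mul_nonneg hb.le (hnonneg y hy)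
  linarith [hzero _ hz]

end Convexity

section NewtonPolytope

open scoped Pointwise

variable {σ R ι : Type*}

/-- The point of `ℝ^σ` with the coordinates of an exponent vector. It extends `toR` to
arbitrary index types. -/
def exponentPoint (a : σ →₀ ℕ) : σ → ℝ := fun i ↦ (a i : ℝ)

theorem exponentPoint_add (a b : σ →₀ ℕ) :
    exponentPoint (a + b) = exponentPoint a + exponentPoint b := by
  ext i
  simp [exponentPoint]

theorem exponentPoint_injective : Function.Injective (exponentPoint (σ := σ)) := fun _ _ h ↦
  Finsupp.ext fun i ↦ Nat.cast_injective (congrFun h i)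

section CommSemiring

variable [CommSemiring R]

/-- The Newton polytope of a polynomial over an arbitrary semiring and in arbitrary variables,
extending `newton`. -/
def newtonPolytope (p : MvPolynomial σ R) : Set (σ → ℝ) :=
  convexHull ℝ (exponentPoint '' p.support)

/-- The convex hull of the exponents that occur in at least one member of a family of
polynomials. -/
def jointNewtonPolytope (q : ι → MvPolynomial σ R) : Set (σ → ℝ) :=
  convexHull ℝ (⋃ i, exponentPoint '' (q i).support)

theorem exponentPoint_mem_newtonPolytope {p : MvPolynomial σ R} {a : σ →₀ ℕ}
    (ha : a ∈ p.support) : exponentPoint a ∈ newtonPolytope p :=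
  subset_convexHull ℝ _ ⟨a, ha, rfl⟩

theorem exponentPoint_mem_jointNewtonPolytope {q : ι → MvPolynomial σ R} {i : ι} {a : σ →₀ ℕ}
    (ha : a ∈ (q i).support) : exponentPoint a ∈ jointNewtonPolytope q :=
  subset_convexHull ℝ _ (Set.mem_iUnion_of_mem i ⟨a, ha, rfl⟩)

theorem convexHull_extremePoints_jointNewtonPolytope [Finite ι] (q : ι → MvPolynomial σ R) :
    convexHull ℝ ((jointNewtonPolytope q).extremePoints ℝ) = jointNewtonPolytope q :=
  convexHull_extremePoints_convexHull_of_finite <|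
    Set.finite_iUnion fun i ↦ (q i).support.finite_toSet.image exponentPoint

theorem exists_mem_support_of_mem_extremePoints_jointNewtonPolytope {q : ι → MvPolynomial σ R}
    {x : σ → ℝ} (hx : x ∈ (jointNewtonPolytope q).extremePoints ℝ) :
    ∃ i, ∃ m ∈ (q i).support, exponentPoint m = x := by
  simpa using extremePoints_convexHull_subset hx

theorem coeff_add_self_sq {p : MvPolynomial σ R} {m : σ →₀ ℕ}
    (h : ∀ b ∈ p.support, ∀ r ∈ p.support, b + r = m + m → b = m) :
    coeff (m + m) (p ^ 2) = coeff m p ^ 2 := by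
  rw [sq, sq, coeff_mul, Finset.sum_eq_single_of_mem (m, m)
    (Finset.HasAntidiagonal.mem_antidiagonal.2 rfl)]
  rintro ⟨b, r⟩ hbr hne
  rw [Finset.HasAntidiagonal.mem_antidiagonal] at hbr
  by_contra hprod
  obtain rfl : b = m := h b (mem_support_iff.2 (left_ne_zero_of_mul hprod)) r
    (mem_support_iff.2 (right_ne_zero_of_mul hprod)) hbr
  exact hne (congrArg (b, ·) (add_left_cancel hbr))

theorem coeff_add_self_sum_sq [Fintype ι] {q : ι → MvPolynomial σ R} {m : σ →₀ ℕ}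
    (hm : exponentPoint m ∈ (jointNewtonPolytope q).extremePoints ℝ) :
    coeff (m + m) (∑ i, q i ^ 2) = ∑ i, coeff m (q i) ^ 2 := by
  rw [coeff_sum]
  refine Finset.sum_congr rfl fun i _ ↦ coeff_add_self_sq fun b hb r hr hbr ↦ ?_
  refine exponentPoint_injective <| eq_of_add_eq_add_self_of_mem_extremePoints hm
    (exponentPoint_mem_jointNewtonPolytope hb) (exponentPoint_mem_jointNewtonPolytope hr) ?_
  rw [← exponentPoint_add, hbr, exponentPoint_add]

theorem newtonPolytope_sum_sq_subset [Fintype ι] (q : ι → MvPolynomial σ R) :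
    newtonPolytope (∑ i, q i ^ 2) ⊆ (2 : ℝ) • jointNewtonPolytope q := by
  have hconv : Convex ℝ (jointNewtonPolytope q) := convex_convexHull ℝ _
  have htwo : (2 : ℝ) • jointNewtonPolytope q = jointNewtonPolytope q + jointNewtonPolytope q := by
    rw [← one_add_one_eq_two, hconv.add_smul zero_le_one zero_le_one, one_smul]
  refine convexHull_min ?_ (hconv.smul 2)
  rintro _ ⟨a, ha, rfl⟩
  obtain ⟨i, -, hi⟩ := Finset.mem_biUnion.1 (support_sum ha)
  rw [sq] at hi
  obtain ⟨b, hb, r, hr, rfl⟩ := Finset.mem_add.1 (support_mul _ _ hi)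
  rw [htwo, exponentPoint_add]
  exact Set.add_mem_add (exponentPoint_mem_jointNewtonPolytope hb)
    (exponentPoint_mem_jointNewtonPolytope hr)

end CommSemiring

section OrderedRing

variable [CommRing R] [LinearOrder R] [IsStrictOrderedRing R] [Fintype ι]

theorem coeff_add_self_sum_sq_pos {q : ι → MvPolynomial σ R} {m : σ →₀ ℕ}
    (hm : exponentPoint m ∈ (jointNewtonPolytope q).extremePoints ℝ) :
    0 < coeff (m + m) (∑ i, q i ^ 2) := by
  obtain ⟨i, m', hm', hmm'⟩ := exists_mem_support_of_mem_extremePoints_jointNewtonPolytope hm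
  obtain rfl : m' = m := exponentPoint_injective hmm'
  rw [coeff_add_self_sum_sq hm]
  exact Finset.sum_pos' (fun j _ ↦ sq_nonneg _)
    ⟨i, Finset.mem_univ i, sq_pos_of_ne_zero (mem_support_iff.1 hm')⟩

theorem two_smul_extremePoints_subset_newtonPolytope_sum_sq (q : ι → MvPolynomial σ R) :
    (2 : ℝ) • (jointNewtonPolytope q).extremePoints ℝ ⊆ newtonPolytope (∑ i, q i ^ 2) := by
  rintro _ ⟨x, hx, rfl⟩
  obtain ⟨i, m, -, rfl⟩ := exists_mem_support_of_mem_extremePoints_jointNewtonPolytope hx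
  have hmem := exponentPoint_mem_newtonPolytope
    (mem_support_iff.2 (coeff_add_self_sum_sq_pos hx).ne')
  rwa [exponentPoint_add, ← two_smul ℝ] at hmem

theorem newtonPolytope_sum_sq (q : ι → MvPolynomial σ R) :
    newtonPolytope (∑ i, q i ^ 2) = (2 : ℝ) • jointNewtonPolytope q := by
  refine (newtonPolytope_sum_sq_subset q).antisymm ?_
  rw [← convexHull_extremePoints_jointNewtonPolytope, ← convexHull_smul]
  exact convexHull_min (two_smul_extremePoints_subset_newtonPolytope_sum_sq q)
    (convex_convexHull ℝ _)

theorem extremePoints_newtonPolytope_sum_sq_subset (q : ι → MvPolynomial σ R) :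
    (newtonPolytope (∑ i, q i ^ 2)).extremePoints ℝ ⊆
      (2 : ℝ) • (jointNewtonPolytope q).extremePoints ℝ := by
  rw [newtonPolytope_sum_sq, ← convexHull_extremePoints_jointNewtonPolytope, ← convexHull_smul,
    convexHull_extremePoints_jointNewtonPolytope]
  exact extremePoints_convexHull_subset

theorem statement14_general (q : ι → MvPolynomial σ R) {v : σ → ℝ}
    (hv : v ∈ (newtonPolytope (∑ i, q i ^ 2)).extremePoints ℝ) :
    ∃ w : σ →₀ ℕ, exponentPoint w = v ∧ (∀ i, Even (w i)) ∧ 0 < coeff w (∑ i, q i ^ 2) := by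
  obtain ⟨x, hx, rfl⟩ := extremePoints_newtonPolytope_sum_sq_subset q hv
  obtain ⟨i, m, -, rfl⟩ := exists_mem_support_of_mem_extremePoints_jointNewtonPolytope hx
  refine ⟨m + m, ?_, fun i ↦ ⟨m i, rfl⟩, coeff_add_self_sum_sq_pos hx⟩
  rw [exponentPoint_add, ← two_smul ℝ]

end OrderedRing

end NewtonPolytope

/-- if `p` is SOS and `v` is a vertex of `New(p)`, then `v` is a lattice
point all of whose coordinates are even, and the coefficient of `x^v` in `p` is positive. -/
theorem statement14 {n : ℕ} (p : MvPolynomial (Fin n) ℝ) (hsos : IsSOS p)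
    (v : Fin n → ℝ) (hv : IsFace (newton p) {v}) :
    ∃ w : Fin n →₀ ℕ, toR w = v ∧ (∀ i, Even (w i)) ∧ 0 < p.coeff w := by
  obtain ⟨s, q, rfl⟩ := hsos
  exact statement14_general q hv.isExtreme.mem_extremePoints
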